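/- arXiv:2101.00211 — 3 statements merged into one kernel-verified Lean document; each statement's English description precedes it below -/
import Mathlib

section
/- Let G = (V,E,ε) be a multigraph, let d = {u,v} be an unordered pair of distinct vertices with ε^{-1}(d) nonempty, and set |e| = |ε^{-1}(d)| (the multiplicity of the multiedge). Suppose u and v are connected in the deletion G∖e (i.e., u and v lie in the same connected component of the graph (V, ε(E∖ε^{-1}(d))))—so the multiedge is neither a loop nor a coloop of the underlying graph. Then T(G;x,y) = T(G∖e;x,y) + ( Σ_{i=0}^{|e|−1} y^i ) · T(G/e;x,y). -/
/-!
The subsets of `E` are the unions `B ∪ C` with `B` a set of edges parallel to `{u,v}` and `C` a set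
of edges of the deletion.

* For `B = ∅` the term of `B ∪ C` in `T(G)` is the term of `C` in `T(G∖e)`: the graphs of `C` in
  `G` and in `G∖e` coincide, and `r(G) = r(G∖e)` because `u` and `v` are connected in `G∖e`.
* For `B ≠ ∅` the graph of `B ∪ C` has as many components as that of `C` in `G/e`
  (`kappa_combine`), while `G/e` has one vertex less (`card_quot`). So `r(B ∪ C)` exceeds the rank
  of `C` in `G/e` by one, and the term of `B ∪ C` is `(y-1)^(|B|-1)` times the term of `C` in
  `T(G/e)`. As exponents are natural numbers, this uses `r(C) ≤ |C|` (`rk_le_ncard`).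

Finally `∑_{B ≠ ∅} (y-1)^(|B|-1) = ∑_{i<|e|} y^i` by induction on `|e|` (`sum_pow_card_pred`).
-/


open scoped Classical

noncomputable section

/-- A multigraph is encoded by a map `ε : E → Sym2 V` assigning to each edge index its
unordered pair of endpoints.  `graphOf ε A` is the simple graph on `V` whose edges are the
endpoint pairs of the edges in `A`. -/
def graphOf {V E : Type*} (ε : E → Sym2 V) (A : Set E) : SimpleGraph V :=
  SimpleGraph.fromEdgeSet (ε '' A)

/-- Number of connected components of the graph `(V, ε(A))` (isolated vertices count). -/
def kappa {V E : Type*} (ε : E → Sym2 V) (A : Set E) : ℕ :=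
  Nat.card (graphOf ε A).ConnectedComponent

/-- Rank function `r(A) = |V| − κ(A)`. -/
def rk {V E : Type*} (ε : E → Sym2 V) (A : Set E) : ℕ :=
  Nat.card V - kappa ε A

/-- Tutte polynomial of a multigraph, evaluated at `(x, y) ∈ ℂ²`:
`T(G;x,y) = Σ_{A ⊆ E} (x−1)^{r(E)−r(A)} (y−1)^{|A|−r(A)}`. -/
def tutte {V E : Type*} (ε : E → Sym2 V) (x y : ℂ) : ℂ :=
  ∑ᶠ A : Set E,
    (x - 1) ^ (rk ε Set.univ - rk ε A) * (y - 1) ^ (A.ncard - rk ε A)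

/-- The edge index set of the deletion `G∖e` of the multiedge with endpoints `{u,v}`. -/
def delEdges {V E : Type*} (ε : E → Sym2 V) (u v : V) : Type _ :=
  {e : E // ε e ≠ s(u, v)}

/-- The endpoint map of the deletion `G∖e`. -/
def delEps {V E : Type*} (ε : E → Sym2 V) (u v : V) : delEdges ε u v → Sym2 V :=
  fun e => ε e.1

/-- The endpoint map of the contraction `G/e`: the edges are those of the deletion, and the
vertex set is the quotient of `V` identifying `u` and `v`. -/
def conEps {V E : Type*} (ε : E → Sym2 V) (u v : V) :
    delEdges ε u v → Sym2 (Quot fun a b => a = u ∧ b = v) :=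
  fun e => (ε e.1).map (Quot.mk fun a b => a = u ∧ b = v)

theorem eq_of_reachable {V β : Type*} {H : SimpleGraph V} (f : V → β)
    (hf : ∀ a b, H.Adj a b → f a = f b) {a b : V} (h : H.Reachable a b) : f a = f b := by
  obtain ⟨p⟩ := h
  induction p with
  | nil => rfl
  | cons h _ ih => exact (hf _ _ h).trans ih

theorem graphOf_adj {V E : Type*} (ε : E → Sym2 V) (A : Set E) (a b : V) :
    (graphOf ε A).Adj a b ↔ (∃ e ∈ A, ε e = s(a, b)) ∧ a ≠ b := by
  simp [graphOf]

/-- Two endpoints of an edge of `A` are connected, even if the edge is a loop. -/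
theorem reachable_of_mem {V E : Type*} (ε : E → Sym2 V) {A : Set E} {e : E} (he : e ∈ A)
    {a b : V} (h : ε e = s(a, b)) : (graphOf ε A).Reachable a b := by
  by_cases hab : a = b
  · exact hab ▸ SimpleGraph.Reachable.refl _
  · exact ((graphOf_adj ε A a b).2 ⟨⟨e, he, h⟩, hab⟩).reachable

/-! ### The rank is at most the number of edges -/

/-- Adding one edge merges at most two components. -/
theorem kappa_insert {V E : Type*} [Finite V] (ε : E → Sym2 V) (e : E) (A : Set E) :
    kappa ε A ≤ kappa ε (insert e A) + 1 := by
  obtain ⟨u, v, huv⟩ : ∃ u v, ε e = s(u, v) := by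
    induction h : ε e with
    | _ u v => exact ⟨u, v, rfl⟩
  have hle : graphOf ε A ≤ graphOf ε (insert e A) :=
    SimpleGraph.fromEdgeSet_mono (Set.image_mono (Set.subset_insert _ _))
  have key : ∀ a b, (graphOf ε (insert e A)).Reachable a b → (graphOf ε A).Reachable a b ∨
      (((graphOf ε A).Reachable a u ∨ (graphOf ε A).Reachable a v) ∧
        ((graphOf ε A).Reachable b u ∨ (graphOf ε A).Reachable b v)) := by
    rintro a b ⟨p⟩
    induction p with
    | nil => exact Or.inl (SimpleGraph.Reachable.refl _)
    | @cons a b c h p ih =>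
      obtain ⟨⟨e', he', hab⟩, hne⟩ := (graphOf_adj _ _ _ _).1 h
      rcases he' with rfl | he'
      · have : (a = u ∧ b = v) ∨ (a = v ∧ b = u) := by
          rw [huv] at hab
          rcases Sym2.eq_iff.1 hab with ⟨h1, h2⟩ | ⟨h1, h2⟩ <;> simp [h1, h2]
        have hr : ∀ w, (graphOf ε A).Reachable w w := fun w => SimpleGraph.Reachable.refl w
        rcases this with ⟨rfl, rfl⟩ | ⟨rfl, rfl⟩
        · rcases ih with ih | ih
          · exact Or.inr ⟨Or.inl (hr _), Or.inr ih.symm⟩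
          · exact Or.inr ⟨Or.inl (hr _), ih.2⟩
        · rcases ih with ih | ih
          · exact Or.inr ⟨Or.inr (hr _), Or.inl ih.symm⟩
          · exact Or.inr ⟨Or.inr (hr _), ih.2⟩
      · have h1 := reachable_of_mem ε he' hab
        rcases ih with ih | ⟨ih1, ih2⟩
        · exact Or.inl (h1.trans ih)
        · exact Or.inr ⟨ih1.imp h1.trans h1.trans, ih2⟩
  -- Away from the component of `u`, the map of components is injective.
  let f : (graphOf ε A).ConnectedComponent →
      Option (graphOf ε (insert e A)).ConnectedComponent := fun c =>
    if c = (graphOf ε A).connectedComponentMk u then none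
    else some (c.map (SimpleGraph.Hom.ofLE hle))
  have hf : Function.Injective f := by
    intro c d
    refine SimpleGraph.ConnectedComponent.ind₂ (fun a b h => ?_) c d
    by_cases ha : (graphOf ε A).connectedComponentMk a = (graphOf ε A).connectedComponentMk u <;>
    by_cases hb : (graphOf ε A).connectedComponentMk b = (graphOf ε A).connectedComponentMk u
    · rw [ha, hb]
    · simp [f, ha, hb] at h
    · simp [f, ha, hb] at h
    · simp only [f, ha, hb, if_false, Option.some.injEq,
        SimpleGraph.ConnectedComponent.map_mk] at h
      have h := key a b (SimpleGraph.ConnectedComponent.exact h)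
      rw [SimpleGraph.ConnectedComponent.eq] at ha hb ⊢
      rcases h with h | ⟨h1, h2⟩
      · exact h
      · exact (h1.resolve_left ha).trans (h2.resolve_left hb).symm
  have := Nat.card_le_card_of_injective f hf
  rwa [Finite.card_option] at this

theorem rk_le_ncard {V E : Type*} [Finite V] [Finite E] (ε : E → Sym2 V) (A : Set E) :
    rk ε A ≤ A.ncard := by
  suffices Nat.card V ≤ kappa ε A + A.ncard by unfold rk; omega
  induction A, A.toFinite using Set.Finite.induction_on with
  | empty =>
    refine le_trans ?_ (Nat.le_add_right _ _)
    refine Nat.card_le_card_of_injective (graphOf ε ∅).connectedComponentMk fun a b h => ?_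
    refine eq_of_reachable id (fun a b h => ?_) (SimpleGraph.ConnectedComponent.exact h)
    simp [graphOf_adj] at h
  | @insert e A he hA ih =>
    rw [Set.ncard_insert_of_notMem he hA]
    have := kappa_insert ε e A
    omega

/-! ### The contraction -/

theorem card_quot {V : Type*} [Finite V] {u v : V} (huv : u ≠ v) :
    Nat.card V = Nat.card (Quot fun a b : V => a = u ∧ b = v) + 1 := by
  let F : (Quot fun a b : V => a = u ∧ b = v) ≃ {w : V // w ≠ v} :=
    { toFun := Quot.lift (fun w => if h : w = v then ⟨u, huv⟩ else ⟨w, h⟩) (by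
        rintro a b ⟨rfl, rfl⟩
        simp [huv])
      invFun := fun w => Quot.mk _ w.1
      left_inv := by
        rintro ⟨w⟩
        by_cases h : w = v
        · subst h
          simpa using Quot.sound (r := fun a b : V => a = u ∧ b = w) ⟨rfl, rfl⟩
        · simp [h]
      right_inv := by
        rintro ⟨w, h⟩
        simp [h] }
  have : Fintype V := Fintype.ofFinite V
  rw [Nat.card_congr F, Nat.card_eq_fintype_card, Nat.card_eq_fintype_card,
    Fintype.card_subtype_compl, Fintype.card_subtype_eq]
  have : 0 < Fintype.card V := Fintype.card_pos_iff.2 ⟨u⟩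
  omega

/-- The set of edges `B ∪ C` of `G`, for `B` a set of edges parallel to `{u,v}` and `C` a set of
edges of the deletion. -/
def combine {V E : Type*} (ε : E → Sym2 V) (u v : V)
    (p : Set {e : E // ε e = s(u, v)} × Set (delEdges ε u v)) : Set E :=
  Subtype.val '' p.1 ∪ (fun e : delEdges ε u v => e.1) '' p.2

theorem mem_combine_of_eq {V E : Type*} (ε : E → Sym2 V) (u v : V)
    (p : Set {e : E // ε e = s(u, v)} × Set (delEdges ε u v)) (e : E) (h : ε e = s(u, v)) :
    e ∈ combine ε u v p ↔ (⟨e, h⟩ : {e : E // ε e = s(u, v)}) ∈ p.1 := by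
  constructor
  · rintro (⟨x, hx, rfl⟩ | ⟨x, hx, rfl⟩)
    · exact hx
    · exact absurd h x.2
  · exact fun hx => Or.inl ⟨_, hx, rfl⟩

theorem mem_combine_of_ne {V E : Type*} (ε : E → Sym2 V) (u v : V)
    (p : Set {e : E // ε e = s(u, v)} × Set (delEdges ε u v)) (e : E) (h : ε e ≠ s(u, v)) :
    e ∈ combine ε u v p ↔ (⟨e, h⟩ : delEdges ε u v) ∈ p.2 := by
  constructor
  · rintro (⟨x, hx, rfl⟩ | ⟨x, hx, rfl⟩)
    · exact absurd x.2 h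
    · exact hx
  · exact fun hx => Or.inr ⟨_, hx, rfl⟩

theorem combine_bijective {V E : Type*} (ε : E → Sym2 V) (u v : V) :
    Function.Bijective (combine ε u v) := by
  refine Function.bijective_iff_has_inverse.2
    ⟨fun A => (Subtype.val ⁻¹' A, (fun e : delEdges ε u v => e.1) ⁻¹' A), fun p => ?_, fun A => ?_⟩
  · refine Prod.ext (Set.ext ?_) (Set.ext ?_)
    · rintro ⟨e, h⟩
      exact mem_combine_of_eq ε u v p e h
    · rintro ⟨e, h⟩
      exact mem_combine_of_ne ε u v p e h
  · ext e
    by_cases h : ε e = s(u, v)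
    · exact mem_combine_of_eq ε u v _ e h
    · exact mem_combine_of_ne ε u v _ e h

theorem combine_univ {V E : Type*} (ε : E → Sym2 V) (u v : V) :
    combine ε u v (Set.univ, Set.univ) = Set.univ := by
  ext e
  by_cases h : ε e = s(u, v)
  · simp [mem_combine_of_eq ε u v _ e h]
  · exact iff_of_true ((mem_combine_of_ne ε u v _ e h).2 (Set.mem_univ _)) (Set.mem_univ _)

theorem ncard_combine {V E : Type*} [Finite E] (ε : E → Sym2 V) (u v : V)
    (p : Set {e : E // ε e = s(u, v)} × Set (delEdges ε u v)) :
    (combine ε u v p).ncard = p.1.ncard + p.2.ncard := by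
  unfold combine
  rw [Set.ncard_union_eq ?_ (Set.toFinite _) (Set.toFinite _),
    Set.ncard_image_of_injective _ Subtype.val_injective, Set.ncard_image_of_injective]
  · exact Subtype.val_injective
  · rw [Set.disjoint_left]
    rintro _ ⟨x, _, rfl⟩ ⟨z, _, hz⟩
    exact z.2 ((congrArg ε hz).trans x.2)

theorem kappa_combine_empty {V E : Type*} (ε : E → Sym2 V) (u v : V)
    (C : Set (delEdges ε u v)) :
    kappa ε (combine ε u v (∅, C)) = kappa (delEps ε u v) C := by
  have : graphOf ε (combine ε u v (∅, C)) = graphOf (delEps ε u v) C := by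
    simp only [graphOf, combine, Set.image_empty, Set.empty_union, Set.image_image]
    rfl
  rw [kappa, this, kappa]

/-- Contracting a nonempty set of edges joining `u` and `v` keeps the number of components. -/
theorem kappa_combine {V E : Type*} (ε : E → Sym2 V) (u v : V)
    (B : Set {e : E // ε e = s(u, v)}) (hB : B.Nonempty) (C : Set (delEdges ε u v)) :
    kappa ε (combine ε u v (B, C)) = kappa (conEps ε u v) C := by
  set H := graphOf ε (combine ε u v (B, C)) with hH
  set K := graphOf (conEps ε u v) C with hK
  have huv : H.Reachable u v := by
    obtain ⟨⟨e, he⟩, hb⟩ := hB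
    exact reachable_of_mem ε ((mem_combine_of_eq ε u v (B, C) e he).2 hb) he
  let π : V → Quot fun a b : V => a = u ∧ b = v := Quot.mk _
  have hπ : π u = π v := Quot.sound ⟨rfl, rfl⟩
  have h1 : ∀ a b, H.Adj a b →
      K.connectedComponentMk (π a) = K.connectedComponentMk (π b) := by
    intro a b hab
    obtain ⟨⟨e, he, hab⟩, -⟩ := (graphOf_adj _ _ _ _).1 hab
    by_cases h : ε e = s(u, v)
    · rw [h] at hab
      rcases Sym2.eq_iff.1 hab with ⟨rfl, rfl⟩ | ⟨rfl, rfl⟩ <;> rw [hπ]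
    · rw [SimpleGraph.ConnectedComponent.eq]
      refine reachable_of_mem (conEps ε u v) ((mem_combine_of_ne ε u v _ e h).1 he) ?_
      simp [conEps, hab, π]
  let g : (Quot fun a b : V => a = u ∧ b = v) → H.ConnectedComponent :=
    Quot.lift H.connectedComponentMk (by
      rintro a b ⟨rfl, rfl⟩
      exact SimpleGraph.ConnectedComponent.sound huv)
  have h2 : ∀ p q, K.Adj p q → g p = g q := by
    rintro ⟨a⟩ ⟨b⟩ hab
    obtain ⟨⟨⟨e, hne⟩, he, hab⟩, -⟩ := (graphOf_adj _ _ _ _).1 hab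
    obtain ⟨c, d, hcd⟩ : ∃ c d, ε e = s(c, d) := by
      induction h : ε e with
      | _ c d => exact ⟨c, d, rfl⟩
    have hg : g (π c) = g (π d) := SimpleGraph.ConnectedComponent.sound
      (reachable_of_mem ε ((mem_combine_of_ne ε u v (B, C) e hne).2 he) hcd)
    simp only [conEps, hcd, Sym2.map_mk] at hab
    rcases Sym2.eq_iff.1 hab with ⟨h, h'⟩ | ⟨h, h'⟩
    · rw [← h, ← h']; exact hg
    · rw [← h, ← h']; exact hg.symm
  refine Nat.card_congr
    { toFun := SimpleGraph.ConnectedComponent.lift (fun a => K.connectedComponentMk (π a))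
        (fun a b p _ => eq_of_reachable _ h1 ⟨p⟩)
      invFun := SimpleGraph.ConnectedComponent.lift g (fun a b p _ => eq_of_reachable _ h2 ⟨p⟩)
      left_inv := ?_
      right_inv := ?_ }
  · intro c
    induction c using SimpleGraph.ConnectedComponent.ind
    rfl
  · intro c
    induction c using SimpleGraph.ConnectedComponent.ind with
    | _ q =>
      obtain ⟨a⟩ := q
      rfl

/-- The edges parallel to `{u,v}` do not affect connectivity if `u` and `v` are connected
without them. -/
theorem kappa_univ {V E : Type*} (ε : E → Sym2 V) (u v : V)
    (hconn : (graphOf (delEps ε u v) Set.univ).Reachable u v) :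
    kappa ε Set.univ = kappa (delEps ε u v) Set.univ := by
  have h1 : ∀ a b, (graphOf ε Set.univ).Adj a b →
      (graphOf (delEps ε u v) Set.univ).connectedComponentMk a =
        (graphOf (delEps ε u v) Set.univ).connectedComponentMk b := by
    intro a b hab
    rw [SimpleGraph.ConnectedComponent.eq]
    obtain ⟨⟨e, he, hab⟩, -⟩ := (graphOf_adj _ _ _ _).1 hab
    by_cases h : ε e = s(u, v)
    · rw [h] at hab
      rcases Sym2.eq_iff.1 hab with ⟨rfl, rfl⟩ | ⟨rfl, rfl⟩
      · exact hconn
      · exact hconn.symm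
    · exact reachable_of_mem (delEps ε u v) (e := ⟨e, h⟩) (Set.mem_univ _) hab
  have h2 : ∀ a b, (graphOf (delEps ε u v) Set.univ).Adj a b →
      (graphOf ε Set.univ).connectedComponentMk a =
        (graphOf ε Set.univ).connectedComponentMk b := by
    intro a b hab
    obtain ⟨⟨e, he, hab⟩, -⟩ := (graphOf_adj _ _ _ _).1 hab
    exact SimpleGraph.ConnectedComponent.sound (reachable_of_mem ε (Set.mem_univ e.1) hab)
  refine Nat.card_congr
    { toFun := SimpleGraph.ConnectedComponent.lift _ (fun a b p _ => eq_of_reachable _ h1 ⟨p⟩)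
      invFun := SimpleGraph.ConnectedComponent.lift _ (fun a b p _ => eq_of_reachable _ h2 ⟨p⟩)
      left_inv := ?_
      right_inv := ?_ } <;>
  · intro c
    induction c using SimpleGraph.ConnectedComponent.ind
    rfl

theorem rk_combine {V E : Type*} [Finite V] (ε : E → Sym2 V) {u v : V} (huv : u ≠ v)
    (B : Set {e : E // ε e = s(u, v)}) (hB : B.Nonempty) (C : Set (delEdges ε u v)) :
    rk ε (combine ε u v (B, C)) = rk (conEps ε u v) C + 1 := by
  have h : kappa (conEps ε u v) C ≤ Nat.card (Quot fun a b : V => a = u ∧ b = v) :=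
    Nat.card_le_card_of_surjective (graphOf (conEps ε u v) C).connectedComponentMk
      fun c => c.exists_rep
  rw [rk, rk, kappa_combine ε u v B hB C, card_quot huv]
  omega

/-! ### The sum over the sets of parallel edges -/

/-- `∑_{∅ ≠ B ⊆ s} t^(|B|-1) = ∑_{i<|s|} (t+1)^i`: both sides are `((t+1)^|s| - 1) / t`
when `t ≠ 0`. -/
theorem sum_pow_card_pred {α : Type*} (t : ℂ) (s : Finset α) :
    ∑ B ∈ s.powerset, (if B = ∅ then 0 else t ^ (B.card - 1)) =
      ∑ i ∈ Finset.range s.card, (t + 1) ^ i := by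
  induction s using Finset.induction_on with
  | empty => simp
  | insert a s ha ih =>
    rw [Finset.sum_powerset_insert ha, ih, Finset.card_insert_of_notMem ha,
      Finset.sum_range_succ]
    congr 1
    have := Finset.sum_pow_mul_eq_add_pow t 1 s
    simp only [one_pow, mul_one] at this
    rw [← this]
    refine Finset.sum_congr rfl fun B hB => ?_
    have haB : a ∉ B := fun h => ha (Finset.mem_powerset.1 hB h)
    simp [Finset.card_insert_of_notMem haB]

theorem sum_pow_ncard_pred {α : Type*} [Finite α] [Fintype (Set α)] (t : ℂ) :
    ∑ B : Set α, (if B = ∅ then 0 else t ^ (B.ncard - 1)) =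
      ∑ i ∈ Finset.range (Nat.card α), (t + 1) ^ i := by
  have : Fintype α := Fintype.ofFinite α
  rw [Nat.card_eq_fintype_card, ← Finset.card_univ, ← sum_pow_card_pred, Finset.powerset_univ]
  refine (Fintype.sum_equiv Fintype.finsetEquivSet _ _ fun B => ?_).symm
  simp [Fintype.finsetEquivSet, Set.ncard_coe_finset]

/-- If `u ≠ v`, the multiedge `{u,v}` is present (nonempty preimage) with
multiplicity `|e|`, and `u` and `v` are still connected in the deletion `G∖e` (so the
multiedge is neither a loop nor a coloop), then
`T(G;x,y) = T(G∖e;x,y) + (Σ_{i=0}^{|e|−1} yⁱ) · T(G/e;x,y)`. -/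
theorem statement9 {V E : Type*} [Finite V] [Finite E] (ε : E → Sym2 V) (u v : V)
    (huv : u ≠ v) (hne : {e : E | ε e = s(u, v)}.Nonempty)
    (hconn : (graphOf (delEps ε u v) Set.univ).Reachable u v) (x y : ℂ) :
    tutte ε x y =
      tutte (delEps ε u v) x y +
        (∑ i ∈ Finset.range {e : E | ε e = s(u, v)}.ncard, y ^ i) *
          tutte (conEps ε u v) x y := by
  have : Finite (delEdges ε u v) := Subtype.finite
  have : Fintype (Set E) := Fintype.ofFinite _
  have : Fintype (Set (delEdges ε u v)) := Fintype.ofFinite _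
  have : Fintype (Set {e : E // ε e = s(u, v)}) := Fintype.ofFinite _
  have hcard : {e : E | ε e = s(u, v)}.ncard = Nat.card {e : E // ε e = s(u, v)} := rfl
  have hU : (Set.univ : Set {e : E // ε e = s(u, v)}).Nonempty := by
    obtain ⟨e, he⟩ := hne
    exact ⟨⟨e, he⟩, trivial⟩
  have hdel : rk ε Set.univ = rk (delEps ε u v) Set.univ := by
    rw [rk, rk, kappa_univ ε u v hconn]
  have hcon : rk ε Set.univ = rk (conEps ε u v) Set.univ + 1 := by
    rw [← combine_univ ε u v, rk_combine ε huv _ hU]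
  have hsum := sum_pow_ncard_pred (α := {e : E // ε e = s(u, v)}) (y - 1)
  rw [sub_add_cancel] at hsum
  rw [hcard, ← hsum]
  simp only [tutte, finsum_eq_sum_of_fintype]
  rw [← (combine_bijective ε u v).sum_comp, Fintype.sum_prod_type, Finset.sum_mul_sum,
    Fintype.sum_eq_add_sum_compl ∅, Fintype.sum_eq_add_sum_compl (∅ : Set _)
      (fun B => ∑ C, (if B = ∅ then 0 else (y - 1) ^ (B.ncard - 1)) * _)]
  simp only [if_true, zero_mul, Finset.sum_const_zero, zero_add]
  congr 1
  · refine Finset.sum_congr rfl fun C _ => ?_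
    have hr : rk ε (combine ε u v (∅, C)) = rk (delEps ε u v) C := by
      rw [rk, rk, kappa_combine_empty]
    rw [hr, hdel, ncard_combine]
    simp
  · refine Finset.sum_congr rfl fun B hB => Finset.sum_congr rfl fun C _ => ?_
    have hB : B ≠ ∅ := by simpa using hB
    have hB' : B.Nonempty := Set.nonempty_iff_ne_empty.2 hB
    have hpos : 0 < B.ncard := (Set.ncard_pos B.toFinite).2 hB'
    have hle := rk_le_ncard (conEps ε u v) C
    have hexp : B.ncard + C.ncard - (rk (conEps ε u v) C + 1) =
        (B.ncard - 1) + (C.ncard - rk (conEps ε u v) C) := by omega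
    rw [rk_combine ε huv B hB' C, hcon, ncard_combine, if_neg hB, Nat.add_sub_add_right, hexp,
      pow_add]
    ring
end
end

section
/- Fix a positive integer k. Let G = (V,D,μ) be a multigraph with multiplicities and let G′ = (V,D,μ′) where μ′(d) = μ(d) mod 4k for each d ∈ D. Let κ be the number of connected components of the graph (V, {d ∈ D : μ(d) ≥ 1}) and κ′ the number of connected components of the graph (V, {d ∈ D : μ′(d) ≥ 1}) (isolated vertices count in both). Then, with x = −i cot(π/4k) and y = e^{iπ/2k}, T(G;x,y) = ( i e^{iπ/4k} sin(π/4k) )^{κ−κ′} · T(G′;x,y). -/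
/-!
The point `(x, y)` lies on the hyperbola `(x - 1) * (y - 1) = 2` and `y ^ (4 * k) = 1`.

Off the lines `x = 1` and `y = 1`, the Tutte polynomial is, up to normalisation, a Potts partition
function:
`(x - 1) ^ κ(E) * (y - 1) ^ |V| * T(G; x, y) = ∑_A q ^ κ(A) * (y - 1) ^ |A|`, with
`q = (x - 1) * (y - 1)` (`tutte_normalised`; it needs `κ(E) ≤ κ(A)` and `|V| ≤ κ(A) + |A|` to
undo the truncated subtractions in the exponents). Grouping the edge sets `A` by the set `S ⊆ D` of
pairs they use, each pair `d ∈ S` contributes `∑_{∅ ≠ B ⊆ Fin (μ d)} (y - 1) ^ |B| = y ^ μ d - 1`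
(`sum_edge_sets`). Hence the partition function depends on `μ` only through the powers `y ^ μ d`,
which do not change when `μ d` is reduced modulo `4 * k`. Only the normalisation
`(x - 1) ^ κ(E)` differs between `G` and the reduced graph, and `i e^{iθ} sin θ = (x - 1)⁻¹` for
`θ = π / 4k`.
-/

open scoped Classical

noncomputable section

/-- The edge index set of the multigraph determined by a multigraph with multiplicities
`(V, D, μ)`: one copy `Fin (μ d)` of each underlying pair `d ∈ D`. -/
def multiE {V : Type*} (D : Finset (Sym2 V)) (μ : Sym2 V → ℕ) : Type _ :=
  Σ d : D, Fin (μ d.1)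

/-- The endpoint map of the multigraph determined by `(V, D, μ)`. -/
def multiEps {V : Type*} (D : Finset (Sym2 V)) (μ : Sym2 V → ℕ) :
    multiE D μ → Sym2 V :=
  fun p => p.1.1

/-- In a graph `H` obtained from `G` by adding at most the edge `ab`, a path either avoids `ab` or
can be shortened so as to use it once. -/
lemma reachable_cases {V : Type*} {G H : SimpleGraph V} {a b : V}
    (h : ∀ u w, H.Adj u w → G.Adj u w ∨ (u = a ∧ w = b) ∨ (u = b ∧ w = a)) {u w : V}
    (huw : H.Reachable u w) :
    G.Reachable u w ∨ (G.Reachable u a ∧ G.Reachable b w) ∨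
      (G.Reachable u b ∧ G.Reachable a w) := by
  obtain ⟨p⟩ := huw
  induction p with
  | nil => exact Or.inl (SimpleGraph.Reachable.refl _)
  | @cons u v w huv p ih =>
    rcases h _ _ huv with h1 | ⟨rfl, rfl⟩ | ⟨rfl, rfl⟩
    · rcases ih with h2 | ⟨h2, h3⟩ | ⟨h2, h3⟩
      · exact Or.inl (h1.reachable.trans h2)
      · exact Or.inr (Or.inl ⟨h1.reachable.trans h2, h3⟩)
      · exact Or.inr (Or.inr ⟨h1.reachable.trans h2, h3⟩)
    · rcases ih with h2 | ⟨h2, h3⟩ | ⟨h2, h3⟩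
      · exact Or.inr (Or.inl ⟨SimpleGraph.Reachable.refl _, h2⟩)
      · exact Or.inr (Or.inl ⟨SimpleGraph.Reachable.refl _, h3⟩)
      · exact Or.inl h3
    · rcases ih with h2 | ⟨h2, h3⟩ | ⟨h2, h3⟩
      · exact Or.inr (Or.inr ⟨SimpleGraph.Reachable.refl _, h2⟩)
      · exact Or.inl h3
      · exact Or.inr (Or.inr ⟨SimpleGraph.Reachable.refl _, h3⟩)

/-- Adding an edge `ab` merges at most two components: components other than that of `a` stay
distinct. -/
lemma card_components_le {V : Type*} [Finite V] {G H : SimpleGraph V} {a b : V} (hGH : G ≤ H)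
    (h : ∀ u w, H.Adj u w → G.Adj u w ∨ (u = a ∧ w = b) ∨ (u = b ∧ w = a)) :
    Nat.card G.ConnectedComponent ≤ Nat.card H.ConnectedComponent + 1 := by
  let f : G.ConnectedComponent → Option H.ConnectedComponent := fun C =>
    if C = G.connectedComponentMk a then none
    else some (C.map (SimpleGraph.Hom.ofLE hGH))
  have hf : Function.Injective f := by
    intro C C' hCC
    induction C using SimpleGraph.ConnectedComponent.ind with | _ u =>
    induction C' using SimpleGraph.ConnectedComponent.ind with | _ w =>
    by_cases h1 : G.connectedComponentMk u = G.connectedComponentMk a <;>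
      by_cases h2 : G.connectedComponentMk w = G.connectedComponentMk a
    · rw [h1, h2]
    · simp [f, h1, h2] at hCC
    · simp [f, h1, h2] at hCC
    · simp only [f, h1, h2, if_false, Option.some.injEq] at hCC
      rw [SimpleGraph.ConnectedComponent.map_mk, SimpleGraph.ConnectedComponent.map_mk,
        SimpleGraph.ConnectedComponent.eq] at hCC
      rw [SimpleGraph.ConnectedComponent.eq] at h1 h2 ⊢
      rcases reachable_cases h hCC with h3 | ⟨h3, -⟩ | ⟨-, h3⟩
      · exact h3
      · exact absurd h3 h1
      · exact absurd h3.symm h2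
  have := Nat.card_le_card_of_injective f hf
  rwa [Finite.card_option] at this

lemma kappa_anti {V E : Type*} [Finite V] (ε : E → Sym2 V) {A B : Set E} (h : A ⊆ B) :
    kappa ε B ≤ kappa ε A :=
  Nat.card_le_card_of_surjective _ (SimpleGraph.ConnectedComponent.surjective_map_ofLE
    (SimpleGraph.fromEdgeSet_mono (Set.image_mono h)))

lemma kappa_le_card {V E : Type*} [Finite V] (ε : E → Sym2 V) (A : Set E) :
    kappa ε A ≤ Nat.card V :=
  Nat.card_le_card_of_surjective _ (Quot.mk_surjective)

/-- The rank of an edge set is at most its size. -/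
lemma card_le_kappa_add {V E : Type*} [Finite V] [Finite E] (ε : E → Sym2 V) (A : Set E) :
    Nat.card V ≤ kappa ε A + A.ncard := by
  induction A, A.toFinite using Set.Finite.induction_on with
  | empty =>
    have hinj : Function.Injective (graphOf ε (∅ : Set E)).connectedComponentMk := by
      intro u w huw
      rw [SimpleGraph.ConnectedComponent.eq] at huw
      simpa [graphOf] using huw
    simpa [kappa] using Nat.card_le_card_of_injective _ hinj
  | @insert e A he hA ih =>
    rw [Set.ncard_insert_of_notMem he hA]
    have : kappa ε A ≤ kappa ε (insert e A) + 1 := by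
      obtain ⟨a, b, hab⟩ : ∃ a b, ε e = s(a, b) := by
        induction ε e using Sym2.ind with | _ a b => exact ⟨a, b, rfl⟩
      refine card_components_le (a := a) (b := b)
        (SimpleGraph.fromEdgeSet_mono (Set.image_mono (Set.subset_insert _ _))) ?_
      intro u w huw
      simp only [graphOf, SimpleGraph.fromEdgeSet_adj, Set.image_insert_eq, Set.mem_insert_iff,
        hab, Sym2.eq_iff] at huw ⊢
      tauto
    omega

/-- The Tutte polynomial as a Potts partition function with `q = (x - 1) * (y - 1)` states. -/
lemma tutte_normalised {V E : Type*} [Finite V] [Finite E] (ε : E → Sym2 V) {x y : ℂ} :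
    (x - 1) ^ kappa ε Set.univ * (y - 1) ^ Nat.card V * tutte ε x y =
      ∑ᶠ A : Set E, ((x - 1) * (y - 1)) ^ kappa ε A * (y - 1) ^ A.ncard := by
  have := Fintype.ofFinite (Set E)
  rw [tutte, finsum_eq_sum_of_fintype, finsum_eq_sum_of_fintype, Finset.mul_sum]
  refine Finset.sum_congr rfl fun A _ => ?_
  have h1 := kappa_anti ε (Set.subset_univ A)
  have h2 := kappa_le_card ε A
  have h3 := card_le_kappa_add ε A
  have e1 : kappa ε A = kappa ε Set.univ + (rk ε Set.univ - rk ε A) := by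
    simp only [rk]; omega
  have e2 : kappa ε A + A.ncard = Nat.card V + (A.ncard - rk ε A) := by
    simp only [rk]; omega
  calc _ = (x - 1) ^ (kappa ε Set.univ + (rk ε Set.univ - rk ε A)) *
        (y - 1) ^ (Nat.card V + (A.ncard - rk ε A)) := by ring
    _ = _ := by rw [← e1, ← e2, pow_add, mul_pow, mul_assoc]

instance multiE_finite {V : Type*} (D : Finset (Sym2 V)) (μ : Sym2 V → ℕ) :
    Finite (multiE D μ) :=
  inferInstanceAs (Finite (Σ d : D, Fin (μ d.1)))

/-- Edge sets of the multigraph, split into the sets of copies of each pair. -/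
def edgeSetEquiv {V : Type*} (D : Finset (Sym2 V)) (μ : Sym2 V → ℕ) :
    (∀ d : D, Finset (Fin (μ d.1))) ≃ Set (multiE D μ) where
  toFun f := {p | p.2 ∈ f p.1}
  invFun A d := Finset.univ.filter fun i => (⟨d, i⟩ : Σ d : D, Fin (μ d.1)) ∈ A
  left_inv f := by ext d i; simp only [Finset.mem_filter_univ]; rfl
  right_inv A := by ext p; simp; rfl

lemma ncard_edgeSetEquiv {V : Type*} (D : Finset (Sym2 V)) (μ : Sym2 V → ℕ)
    (f : ∀ d : D, Finset (Fin (μ d.1))) :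
    (edgeSetEquiv D μ f).ncard = ∑ d, (f d).card := by
  have : edgeSetEquiv D μ f = ((Finset.univ.sigma f : Finset (Σ d : D, Fin (μ d.1))) :
      Set (Σ d : D, Fin (μ d.1))) := by
    ext p
    exact ⟨fun h => Finset.mem_coe.2 (Finset.mem_sigma.2 ⟨Finset.mem_univ _, h⟩),
      fun h => (Finset.mem_sigma.1 (Finset.mem_coe.1 h)).2⟩
  rw [← Finset.card_sigma, ← Set.ncard_coe_finset, ← this]
  rfl

lemma image_edgeSetEquiv {V : Type*} (D : Finset (Sym2 V)) (μ : Sym2 V → ℕ)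
    (f : ∀ d : D, Finset (Fin (μ d.1))) :
    multiEps D μ '' edgeSetEquiv D μ f = Subtype.val '' {d : D | (f d).Nonempty} := by
  ext e
  constructor
  · rintro ⟨⟨d, i⟩, hp, rfl⟩
    exact ⟨d, ⟨i, hp⟩, rfl⟩
  · rintro ⟨d, ⟨i, hi⟩, rfl⟩
    exact ⟨⟨d, i⟩, hi, rfl⟩

lemma sum_pow_card (n : ℕ) (v : ℂ) (P : Prop) :
    ∑ B : Finset (Fin n) with (B.Nonempty ↔ P), v ^ B.card =
      if P then (1 + v) ^ n - 1 else 1 := by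
  have hall : ∑ B : Finset (Fin n), v ^ B.card = (1 + v) ^ n := by
    have := Finset.sum_pow_mul_eq_add_pow v 1 (Finset.univ : Finset (Fin n))
    simpa [add_comm] using this
  have hempty : ∑ B : Finset (Fin n) with ¬ B.Nonempty, v ^ B.card = 1 := by
    have : (Finset.univ.filter fun B : Finset (Fin n) => ¬ B.Nonempty) = {∅} := by
      ext B; simp
    rw [this]; simp
  by_cases hP : P
  · simp only [hP, iff_true, if_true]
    rw [← hall, ← Finset.sum_filter_add_sum_filter_not Finset.univ
      (fun B : Finset (Fin n) => B.Nonempty), hempty]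
    ring
  · simpa only [hP, iff_false, if_false] using hempty

/-- Summation over edge sets, grouped by the set `S` of underlying pairs; the weight `g` depends
only on the pairs used. -/
lemma sum_edge_sets {V : Type*} (D : Finset (Sym2 V)) (μ : Sym2 V → ℕ) (g : Set (Sym2 V) → ℂ)
    (v : ℂ) :
    ∑ᶠ A : Set (multiE D μ), g (multiEps D μ '' A) * v ^ A.ncard =
      ∑ S : Set D, g (Subtype.val '' S) *
        ∏ d : D, if d ∈ S then (1 + v) ^ μ d.1 - 1 else 1 := by
  rw [← finsum_comp_equiv (edgeSetEquiv D μ), finsum_eq_sum_of_fintype]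
  simp only [ncard_edgeSetEquiv, image_edgeSetEquiv]
  rw [← Finset.sum_fiberwise Finset.univ
    (fun f : ∀ d : D, Finset (Fin (μ d.1)) => {d : D | (f d).Nonempty})]
  refine Finset.sum_congr rfl fun S _ => ?_
  simp only [← sum_pow_card]
  rw [Finset.prod_univ_sum, Finset.mul_sum]
  refine Finset.sum_congr ?_ fun f hf => ?_
  · ext f
    simp [Fintype.mem_piFinset, Set.ext_iff]
  · have hS : {d : D | (f d).Nonempty} = S := by
      ext d; simpa using Fintype.mem_piFinset.1 hf d
    rw [hS, Finset.prod_pow_eq_pow_sum]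


/-- Reducing all multiplicities modulo `4k` changes the Tutte polynomial at
`x = −i cot(π/4k)`, `y = e^{iπ/2k}` by the factor `(i e^{iπ/4k} sin(π/4k))^{κ−κ′}`, where `κ`
and `κ′` are the numbers of connected components of `G` and of the reduced graph `G′`. -/
theorem statement12 {V : Type*} [Finite V] (k : ℕ) (hk : 0 < k)
    (D : Finset (Sym2 V)) (μ : Sym2 V → ℕ) (x y : ℂ)
    (hx : x = -Complex.I *
      ((Real.cos (Real.pi / (4 * k)) : ℂ) / (Real.sin (Real.pi / (4 * k)) : ℂ)))
    (hy : y = Complex.exp (Complex.I * ((Real.pi : ℂ) / (2 * k)))) :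
    tutte (multiEps D μ) x y =
      (Complex.I * Complex.exp (Complex.I * ((Real.pi : ℂ) / (4 * k))) *
            (Real.sin (Real.pi / (4 * k)) : ℂ)) ^
          ((kappa (multiEps D μ) Set.univ : ℤ) -
            (kappa (multiEps D (fun d => μ d % (4 * k))) Set.univ : ℤ)) *
        tutte (multiEps D (fun d => μ d % (4 * k))) x y := by
  have hkR : (0 : ℝ) < k := by exact_mod_cast hk
  have hkC : (k : ℂ) ≠ 0 := by exact_mod_cast hk.ne'
  set θ : ℝ := Real.pi / (4 * k) with hθ
  have hθC : (Real.pi : ℂ) / (4 * k) = (θ : ℂ) := by rw [hθ]; push_cast; rfl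
  have hs : (Real.sin θ : ℂ) ≠ 0 := by
    have h0 : 0 < θ := by positivity
    have h1 : θ < Real.pi := by
      have : (1 : ℝ) ≤ k := by exact_mod_cast hk
      rw [hθ, div_lt_iff₀ (by positivity)]
      nlinarith [Real.pi_pos]
    exact_mod_cast (Real.sin_pos_of_pos_of_lt_pi h0 h1).ne'
  have hexp : Complex.exp (Complex.I * θ) = Real.cos θ + Real.sin θ * Complex.I := by
    rw [mul_comm, Complex.exp_mul_I]; push_cast; rfl
  have hsc : (Real.sin θ : ℂ) ^ 2 + (Real.cos θ : ℂ) ^ 2 = 1 := by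
    exact_mod_cast Real.sin_sq_add_cos_sq θ
  have hI := Complex.I_sq
  rw [hθC]
  set c := Complex.I * Complex.exp (Complex.I * θ) * (Real.sin θ : ℂ) with hc
  have hxc : c * (x - 1) = 1 := by
    rw [hc, hexp, hx]
    field_simp
    linear_combination (-(Real.cos θ : ℂ) ^ 2 - (Real.sin θ : ℂ) ^ 2 -
      Complex.I * Real.cos θ * Real.sin θ) * hI + hsc
  have hyc : y - 1 = 2 * c := by
    have : y = Complex.exp (Complex.I * θ) ^ 2 := by
      rw [hy, ← Complex.exp_nat_mul, ← hθC]
      congr 1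
      push_cast
      field_simp
      ring
    rw [this, hc, hexp]
    linear_combination hsc - (Real.sin θ : ℂ) ^ 2 * hI
  have hy1 : y ^ (4 * k) = 1 := by
    rw [hy, ← Complex.exp_nat_mul, ← Complex.exp_two_pi_mul_I]
    congr 1
    push_cast
    field_simp
    ring
  have hc0 : c ≠ 0 := left_ne_zero_of_mul_eq_one hxc
  have hx1 : x - 1 = c⁻¹ := eq_inv_of_mul_eq_one_right hxc
  have hv : y - 1 ≠ 0 := by rw [hyc]; exact mul_ne_zero two_ne_zero hc0
  have hZ : ∀ ν : Sym2 V → ℕ,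
      (x - 1) ^ kappa (multiEps D ν) Set.univ * (y - 1) ^ Nat.card V *
        tutte (multiEps D ν) x y =
      ∑ S : Set D, ((x - 1) * (y - 1)) ^
          Nat.card (SimpleGraph.fromEdgeSet (Subtype.val '' S)).ConnectedComponent *
        ∏ d : D, if d ∈ S then y ^ ν d.1 - 1 else 1 := by
    intro ν
    have h := sum_edge_sets D ν (fun T => ((x - 1) * (y - 1)) ^
      Nat.card (SimpleGraph.fromEdgeSet T).ConnectedComponent) (y - 1)
    rw [add_sub_cancel] at h
    rw [tutte_normalised, ← h]
    rfl
  have hpow : ∀ n : ℕ, y ^ (n % (4 * k)) = y ^ n := fun n => (pow_eq_pow_mod n hy1).symm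
  have key := (hZ μ).trans (Eq.trans (by simp only [hpow]) (hZ fun d => μ d % (4 * k)).symm)
  rw [hx1, mul_right_comm,
    mul_right_comm (c⁻¹ ^ kappa (multiEps D fun d => μ d % (4 * k)) Set.univ)] at key
  have key2 := mul_right_cancel₀ (pow_ne_zero _ hv) key
  rw [zpow_sub₀ hc0, zpow_natCast, zpow_natCast]
  rw [inv_pow, inv_pow] at key2
  field_simp at key2 ⊢
  linear_combination key2
end
end

section
/- Let n ≥ 3 and let G be the multigraph with multiplicities whose vertex set is ℤ_n, whose underlying edges are e_j = {j−1, j} for j = 1,…,n (indices modulo n, so the underlying graph is an n-cycle), with multiplicities m_j = μ(e_j) ≥ 1. Then T(G;x,y) = Σ_{k=1}^{n−2} ( Π_{j=k+1}^{n} y_x(m_j) · Π_{j=1}^{k−1} y_1(m_j) ) + y_x(m_{n−1} + m_n) · Π_{j=1}^{n−2} y_1(m_j), where y_x(j) := x + Σ_{i=1}^{j−1} y^i and y_1(j) := 1 + Σ_{i=1}^{j−1} y^i. -/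
/-!
A set of edges of the fat cycle is a choice, for each `j`, of a set of parallel copies of `e_j`.
If `S` is the set of `j` for which at least one copy is chosen, the rank is `|S|` when `S` is proper
(the components are arcs, one for each `j ∉ S`) and `n - 1` when `S` is everything. Since
`∑_{∅ ≠ B ⊆ [m]} (y - 1)^{|B| - 1} = y_1(m)`, with `a_j = y_1(m_j)` the subset expansion becomes
`T = ∑_{S proper} (x - 1)^{n - 1 - |S|} ∏_{j ∈ S} a_j + (y - 1) ∏_j a_j` (`tutte_cycEps`).

Sorting the proper `S` by their least missing element `k` gives
`∑_{k=1}^n ∏_{j > k} (a_j + x - 1) ∏_{j < k} a_j` (`sum_ssubset`), where `a_j + x - 1 = y_x(m_j)`.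
The terms `k = n - 1`, `k = n` and the `(y - 1)`-term merge into the last summand of the formula
by `y_1(a + b) = y_1(a) + y_1(b) + (y - 1) y_1(a) y_1(b)` (`y1_add`).
-/

open scoped Classical

noncomputable section

/-- `y_x(j) = x + Σ_{i=1}^{j−1} yⁱ`. -/
def yx (x y : ℂ) (j : ℕ) : ℂ := x + ∑ i ∈ Finset.Icc 1 (j - 1), y ^ i

/-- `y_1(j) = 1 + Σ_{i=1}^{j−1} yⁱ`. -/
def y1 (y : ℂ) (j : ℕ) : ℂ := 1 + ∑ i ∈ Finset.Icc 1 (j - 1), y ^ i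

/-- The underlying edge `e_j = {j−1, j}` of the `n`-cycle on `ℤ_n`. -/
def cycEdge (n : ℕ) (j : ℕ) : Sym2 (ZMod n) := s((j : ZMod n) - 1, (j : ZMod n))

/-! ### Components of subgraphs of the cycle -/

theorem kappa_of_univ {n : ℕ} [NeZero n] (S : Set (ZMod n)) (hS : S = Set.univ) :
    Nat.card (SimpleGraph.fromEdgeSet ((fun j : ZMod n => s(j - 1, j)) '' S)).ConnectedComponent
      = 1 := by
  subst hS
  set G := SimpleGraph.fromEdgeSet ((fun j : ZMod n => s(j - 1, j)) '' Set.univ) with hG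
  have step : ∀ v : ZMod n, G.Reachable (v - 1) v := by
    intro v
    by_cases h : v - 1 = v
    · rw [h]
    · refine SimpleGraph.Adj.reachable ?_
      rw [hG, SimpleGraph.fromEdgeSet_adj]
      exact ⟨⟨v, trivial, rfl⟩, h⟩
  have key : ∀ k : ℕ, G.Reachable 0 (k : ZMod n) := by
    intro k
    induction k with
    | zero => simp
    | succ k ih =>
      have := step ((k + 1 : ℕ) : ZMod n)
      push_cast at this ⊢
      rw [add_sub_cancel_right] at this
      exact ih.trans this
  rw [Nat.card_eq_one_iff_exists]
  refine ⟨G.connectedComponentMk 0, fun c => ?_⟩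
  induction c using SimpleGraph.ConnectedComponent.ind with
  | h v =>
    rw [SimpleGraph.ConnectedComponent.eq]
    have := key v.val
    rw [ZMod.natCast_zmod_val] at this
    exact this.symm

/-- When `S` misses some edge, each component is an arc; its first vertex `j` is the unique vertex
of the component with `j ∉ S`. -/
theorem kappa_of_ne_univ {n : ℕ} [NeZero n] (S : Set (ZMod n)) (hS : S ≠ Set.univ) :
    Nat.card (SimpleGraph.fromEdgeSet ((fun j : ZMod n => s(j - 1, j)) '' S)).ConnectedComponent
      = Nat.card (Sᶜ : Set (ZMod n)) := by
  set G := SimpleGraph.fromEdgeSet ((fun j : ZMod n => s(j - 1, j)) '' S) with hG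
  have step : ∀ v ∈ S, G.Reachable (v - 1) v := by
    intro v hv
    by_cases h : v - 1 = v
    · rw [h]
    · refine SimpleGraph.Adj.reachable ?_
      rw [hG, SimpleGraph.fromEdgeSet_adj]
      exact ⟨⟨v, hv, rfl⟩, h⟩
  obtain ⟨w, hw⟩ := (Set.ne_univ_iff_exists_notMem S).1 hS
  have ex : ∀ v : ZMod n, ∃ k : ℕ, v - (k : ZMod n) ∉ S := fun v =>
    ⟨(v - w).val, by rw [ZMod.natCast_zmod_val]; simpa using hw⟩
  -- `f v` is the first vertex outside `S` met when walking backwards from `v`.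
  let f : ZMod n → ZMod n := fun v => v - (Nat.find (ex v) : ℕ)
  have f_notMem : ∀ v, f v ∉ S := fun v => Nat.find_spec (ex v)
  have f_self : ∀ v, v ∉ S → f v = v := by
    intro v hv
    have : Nat.find (ex v) = 0 := by
      rw [Nat.find_eq_zero]; simpa using hv
    simp [f, this]
  have f_step : ∀ v ∈ S, f v = f (v - 1) := by
    intro v hv
    have h1 : Nat.find (ex v) = Nat.find (ex (v - 1)) + 1 := by
      have h2 : ∃ k : ℕ, v - ((k + 1 : ℕ) : ZMod n) ∉ S := by
        obtain ⟨k, hk⟩ := ex (v - 1)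
        refine ⟨k, ?_⟩
        push_cast
        rwa [show v - ((k : ZMod n) + 1) = v - 1 - k by ring]
      rw [Nat.find_comp_succ (ex v) h2 (by simpa using hv)]
      congr 1
      apply Nat.find_congr'
      intro k
      push_cast
      rw [show v - ((k : ZMod n) + 1) = v - 1 - k by ring]
    simp only [f, h1]
    push_cast
    ring
  have f_adj : ∀ u v, G.Adj u v → f u = f v := by
    intro u v h
    rw [hG, SimpleGraph.fromEdgeSet_adj] at h
    obtain ⟨⟨j, hj, hjuv⟩, -⟩ := h
    rcases Sym2.eq_iff.1 hjuv with ⟨h1, h2⟩ | ⟨h1, h2⟩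
    · rw [← h1, ← h2]; exact (f_step j hj).symm
    · rw [← h1, ← h2]; exact f_step j hj
  have f_reach : ∀ u v, G.Reachable u v → f u = f v := by
    rintro u v ⟨p⟩
    induction p with
    | nil => rfl
    | cons h _ ih => exact (f_adj _ _ h).trans ih
  have reach_f : ∀ (k : ℕ) (v : ZMod n), Nat.find (ex v) = k → G.Reachable v (f v) := by
    intro k
    induction k with
    | zero =>
      intro v h
      simp [f, h]
    | succ k ih =>
      intro v h
      have hv : v ∈ S := by
        by_contra hv
        have : Nat.find (ex v) = 0 := by
          rw [Nat.find_eq_zero]; simpa using hv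
        omega
      have h2 : Nat.find (ex (v - 1)) = k := by
        rw [Nat.find_eq_iff] at h ⊢
        refine ⟨?_, fun m hm => ?_⟩
        · have := h.1
          push_cast at this
          rwa [show v - ((k : ZMod n) + 1) = v - 1 - k by ring] at this
        · have := h.2 (m + 1) (by omega)
          push_cast at this
          rwa [show v - ((m : ZMod n) + 1) = v - 1 - m by ring] at this
      rw [f_step v hv]
      exact (step v hv).symm.trans (ih _ h2)
  symm
  refine Nat.card_congr (Equiv.ofBijective (fun j => G.connectedComponentMk j.1) ⟨?_, ?_⟩)
  · rintro ⟨u, hu⟩ ⟨v, hv⟩ h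
    have := f_reach u v (SimpleGraph.ConnectedComponent.eq.1 h)
    rw [f_self u hu, f_self v hv] at this
    exact Subtype.ext this
  · intro c
    induction c using SimpleGraph.ConnectedComponent.ind with
    | h v =>
      exact ⟨⟨f v, f_notMem v⟩, SimpleGraph.ConnectedComponent.eq.2 (reach_f _ v rfl).symm⟩

/-! ### Edge sets as families of sets of parallel copies -/

/-- The endpoint map of the fat cycle, with edge copies indexed by `ZMod n` rather than by the
underlying pairs. -/
def cycEps {n : ℕ} (m : ZMod n → ℕ) : (Σ j : ZMod n, Fin (m j)) → Sym2 (ZMod n) :=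
  fun p => s(p.1 - 1, p.1)

/-- Edge sets correspond to families `p`, where `p j` is the set of chosen copies over `j`. -/
def fiberEquiv {ι : Type*} (m : ι → ℕ) : (∀ j, Finset (Fin (m j))) ≃ Set (Σ j : ι, Fin (m j)) where
  toFun p := {q | q.2 ∈ p q.1}
  invFun A := fun j => Finset.univ.filter (fun i => (⟨j, i⟩ : Σ j : ι, Fin (m j)) ∈ A)
  left_inv p := by ext j i; simp
  right_inv A := by ext ⟨j, i⟩; simp

/-- The set of `j` over which some copy is chosen. -/
def supp {ι : Type*} [Fintype ι] {m : ι → ℕ} (p : ∀ j, Finset (Fin (m j))) : Finset ι :=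
  Finset.univ.filter (fun j => (p j).Nonempty)

theorem rk_fiberEquiv {n : ℕ} [NeZero n] (m : ZMod n → ℕ) (p : ∀ j, Finset (Fin (m j))) :
    rk (cycEps m) (fiberEquiv m p) =
      if supp p = Finset.univ then n - 1 else (supp p).card := by
  have himg : cycEps m '' (fiberEquiv m p) =
      (fun j : ZMod n => s(j - 1, j)) '' (supp p : Set (ZMod n)) := by
    ext e
    constructor
    · rintro ⟨⟨j, i⟩, hq, rfl⟩
      exact ⟨j, by simpa [supp] using ⟨i, hq⟩, rfl⟩
    · rintro ⟨j, hj, rfl⟩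
      obtain ⟨i, hi⟩ : (p j).Nonempty := by simpa [supp] using hj
      exact ⟨⟨j, i⟩, hi, rfl⟩
  unfold rk kappa graphOf
  rw [himg, Nat.card_zmod]
  split_ifs with h
  · rw [kappa_of_univ _ (by simp [h])]
  · rw [kappa_of_ne_univ _ (by simpa using h), Nat.card_coe_set_eq, ← Finset.coe_compl,
      Set.ncard_coe_finset, Finset.card_compl, ZMod.card]
    have : (supp p).card ≤ n := by simpa [ZMod.card] using Finset.card_le_univ (supp p)
    omega

theorem ncard_fiberEquiv {ι : Type*} [Fintype ι] (m : ι → ℕ) (p : ∀ j, Finset (Fin (m j))) :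
    (fiberEquiv m p).ncard = (supp p).card + ∑ j, ((p j).card - 1) := by
  have : fiberEquiv m p = ((Finset.univ.sigma p : Finset (Σ j : ι, Fin (m j))) : Set _) := by
    ext q; simp [fiberEquiv]
  rw [this, Set.ncard_coe_finset, Finset.card_sigma, supp, Finset.card_filter,
    ← Finset.sum_add_distrib]
  refine Finset.sum_congr rfl fun j _ => ?_
  split_ifs with h
  · have := h.card_pos
    omega
  · simp [Finset.not_nonempty_iff_eq_empty.1 h]

/-! ### Subset expansion grouped by underlying edges -/

/-- Generating function of the nonempty sets of parallel copies:
`∑_{∅ ≠ B ⊆ [m]} (y - 1)^{|B| - 1} = 1 + y + ⋯ + y^{m-1}`. -/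
theorem sum_nonempty (y : ℂ) (m : ℕ) :
    ∑ B ∈ (Finset.univ : Finset (Finset (Fin m))).filter (fun B => B.Nonempty),
      (y - 1) ^ (B.card - 1) = ∑ i ∈ Finset.range m, y ^ i := by
  have h0 : ∑ B ∈ (Finset.univ : Finset (Finset (Fin m))).filter (fun B => B.Nonempty),
      (y - 1) ^ (B.card - 1)
      = ∑ k ∈ Finset.range m, (m.choose (k + 1) : ℂ) * (y - 1) ^ k := by
    rw [Finset.sum_filter, ← Finset.powerset_univ, Finset.sum_powerset, Finset.card_univ,
      Fintype.card_fin, Finset.sum_range_succ']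
    simp only [Finset.powersetCard_zero, Finset.sum_singleton, Finset.not_nonempty_empty,
      if_false, add_zero]
    refine Finset.sum_congr rfl fun k _ => ?_
    rw [Finset.sum_congr rfl (g := fun _ => (y - 1) ^ k)]
    · simp [Finset.card_powersetCard]
    · intro B hB
      have hc := (Finset.mem_powersetCard.1 hB).2
      rw [if_pos (Finset.card_pos.1 (by omega)), hc, Nat.add_sub_cancel]
  rw [h0]
  clear h0
  induction m with
  | zero => simp
  | succ m ih =>
    rw [Finset.sum_range_succ (fun i => y ^ i), ← ih]
    have hy : y ^ m = ∑ k ∈ Finset.range (m + 1), (m.choose k : ℂ) * (y - 1) ^ k := by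
      have := add_pow (y - 1) 1 m
      rw [sub_add_cancel] at this
      rw [this]
      refine Finset.sum_congr rfl fun k _ => ?_
      rw [one_pow]; ring
    have h1 : ∑ k ∈ Finset.range m, (m.choose (k + 1) : ℂ) * (y - 1) ^ k
        = ∑ k ∈ Finset.range (m + 1), (m.choose (k + 1) : ℂ) * (y - 1) ^ k := by
      rw [Finset.sum_range_succ]; simp
    rw [h1, hy, ← Finset.sum_add_distrib]
    refine Finset.sum_congr rfl fun k _ => ?_
    rw [Nat.choose_succ_succ]
    push_cast
    ring

/-- Grouping families of copies by their support `S`. -/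
theorem sum_by_supp {ι : Type*} [Fintype ι] [DecidableEq ι] (m : ι → ℕ) (g : Finset ι → ℂ) (y : ℂ) :
    ∑ p : (∀ j, Finset (Fin (m j))), g (supp p) * ∏ j, (y - 1) ^ ((p j).card - 1)
      = ∑ S : Finset ι, g S * ∏ j ∈ S, ∑ i ∈ Finset.range (m j), y ^ i := by
  rw [← Finset.sum_fiberwise (s := Finset.univ) (g := supp)]
  refine Finset.sum_congr rfl fun S _ => ?_
  have hset : (Finset.univ.filter fun p : (∀ j, Finset (Fin (m j))) => supp p = S)
      = Fintype.piFinset (fun j => if j ∈ S then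
          (Finset.univ : Finset (Finset (Fin (m j)))).filter (fun B => B.Nonempty) else {∅}) := by
    ext p
    simp only [Finset.mem_filter, Finset.mem_univ, true_and, Fintype.mem_piFinset, supp,
      Finset.ext_iff (s₂ := S)]
    refine forall_congr' fun j => ?_
    by_cases hj : j ∈ S <;> simp [hj, Finset.not_nonempty_iff_eq_empty]
  rw [Finset.sum_congr rfl (g := fun p => g S * ∏ j, (y - 1) ^ ((p j).card - 1))
    (fun p hp => by rw [(Finset.mem_filter.1 hp).2]), ← Finset.mul_sum, hset,
    ← Finset.prod_univ_sum _ (fun j (B : Finset (Fin (m j))) => (y - 1) ^ (B.card - 1))]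
  congr 1
  rw [← Finset.prod_subset (Finset.subset_univ S)]
  · refine Finset.prod_congr rfl fun j hj => ?_
    rw [if_pos hj, sum_nonempty]
  · intro j _ hj
    simp [hj]

/-- Subset expansion of the Tutte polynomial of the fat cycle, grouped by the underlying edges. -/
theorem tutte_cycEps {n : ℕ} [NeZero n] (m : ZMod n → ℕ) (hm : ∀ j, 1 ≤ m j) (x y : ℂ) :
    tutte (cycEps m) x y = ∑ S : Finset (ZMod n),
      (if S = Finset.univ then y - 1 else (x - 1) ^ (n - 1 - S.card)) *
        ∏ j ∈ S, ∑ i ∈ Finset.range (m j), y ^ i := by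
  have hn : 1 ≤ n := Nat.one_le_iff_ne_zero.2 (NeZero.ne n)
  have huniv : rk (cycEps m) Set.univ = n - 1 := by
    have h := rk_fiberEquiv m (fun _ => Finset.univ)
    rw [show fiberEquiv m (fun _ => Finset.univ) = Set.univ by ext q; simp [fiberEquiv]] at h
    rw [h, if_pos]
    ext j
    simp only [supp, Finset.mem_filter, Finset.mem_univ, true_and, iff_true]
    exact ⟨⟨0, hm j⟩, Finset.mem_univ _⟩
  rw [tutte, finsum_eq_sum_of_fintype, ← (fiberEquiv m).sum_comp, ← sum_by_supp]
  refine Finset.sum_congr rfl fun p _ => ?_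
  rw [huniv, rk_fiberEquiv, ncard_fiberEquiv, Finset.prod_pow_eq_pow_sum]
  split_ifs with h
  · rw [h, Finset.card_univ, ZMod.card, Nat.sub_self, pow_zero, one_mul, ← pow_succ']
    congr 1
    omega
  · rw [Nat.add_sub_cancel_left]

/-! ### Algebraic identities -/

/-- Classifying the proper subsets of `s` by their least missing element `k`. -/
theorem sum_ssubset {ι : Type*} [LinearOrder ι] (X : ℂ) (a : ι → ℂ) (s : Finset ι) :
    ∑ S ∈ s.powerset.erase s, X ^ (s.card - 1 - S.card) * ∏ j ∈ S, a j
      = ∑ k ∈ s, (∏ j ∈ s.filter (fun j => k < j), (a j + X)) *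
          ∏ j ∈ s.filter (fun j => j < k), a j := by
  induction s using Finset.induction_on_min with
  | empty => simp
  | insert b s hb ih =>
    have hbs : b ∉ s := fun h => lt_irrefl _ (hb b h)
    have hset : (insert b s).powerset.erase (insert b s)
        = s.powerset ∪ (s.powerset.erase s).image (insert b) := by
      rw [Finset.powerset_insert]
      ext S
      simp only [Finset.mem_erase, Finset.mem_union, Finset.mem_image, Finset.mem_powerset]
      constructor
      · rintro ⟨h1, h2 | ⟨U, h2, rfl⟩⟩
        · exact Or.inl h2
        · exact Or.inr ⟨U, ⟨fun h => h1 (by rw [h]), h2⟩, rfl⟩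
      · rintro (h | ⟨U, ⟨h1, h2⟩, rfl⟩)
        · exact ⟨fun h' => hbs (h (h' ▸ Finset.mem_insert_self _ _)), Or.inl h⟩
        · refine ⟨fun h' => h1 ?_, Or.inr ⟨U, h2, rfl⟩⟩
          rw [← Finset.erase_insert hbs, ← h', Finset.erase_insert (fun h => hbs (h2 h))]
    have hdisj : Disjoint s.powerset ((s.powerset.erase s).image (insert b)) := by
      rw [Finset.disjoint_left]
      intro S hS hS'
      obtain ⟨U, -, rfl⟩ := Finset.mem_image.1 hS'
      exact hbs (Finset.mem_powerset.1 hS (Finset.mem_insert_self _ _))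
    rw [hset, Finset.sum_union hdisj, Finset.sum_insert hbs, Finset.card_insert_of_notMem hbs]
    congr 1
    · rw [Finset.filter_insert, if_neg (lt_irrefl b), Finset.filter_true_of_mem hb,
        Finset.filter_false_of_mem, Finset.prod_empty, mul_one, Finset.prod_add]
      · refine Finset.sum_congr rfl fun S hS => ?_
        rw [Finset.prod_const, Finset.card_sdiff_of_subset (Finset.mem_powerset.1 hS),
          Nat.add_sub_cancel, mul_comm]
      · intro j hj
        rcases Finset.mem_insert.1 hj with rfl | hj
        · exact lt_irrefl _
        · exact (hb j hj).not_gt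
    · rw [Finset.sum_image]
      · have hR : ∀ k ∈ s, (∏ j ∈ (insert b s).filter (fun j => k < j), (a j + X)) *
            ∏ j ∈ (insert b s).filter (fun j => j < k), a j
            = a b * ((∏ j ∈ s.filter (fun j => k < j), (a j + X)) *
              ∏ j ∈ s.filter (fun j => j < k), a j) := by
          intro k hk
          rw [Finset.filter_insert, if_neg (hb k hk).not_gt, Finset.filter_insert,
            if_pos (hb k hk), Finset.prod_insert (by simp [hbs])]
          ring
        rw [Finset.sum_congr rfl hR, ← Finset.mul_sum, ← ih, Finset.mul_sum]
        refine Finset.sum_congr rfl fun S hS => ?_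
        rw [Finset.mem_erase, Finset.mem_powerset] at hS
        have hbS : b ∉ S := fun h => hbs (hS.2 h)
        rw [Finset.prod_insert hbS, Finset.card_insert_of_notMem hbS,
          show s.card + 1 - 1 - (S.card + 1) = s.card - 1 - S.card by omega]
        ring
      · intro S hS U hU h
        have h1 : b ∉ S := fun h => hbs (Finset.mem_powerset.1 (Finset.mem_of_mem_erase hS) h)
        have h2 : b ∉ U := fun h => hbs (Finset.mem_powerset.1 (Finset.mem_of_mem_erase hU) h)
        rw [← Finset.erase_insert h1, h, Finset.erase_insert h2]

theorem y1_eq (y : ℂ) {j : ℕ} (hj : 1 ≤ j) : y1 y j = ∑ i ∈ Finset.range j, y ^ i := by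
  obtain ⟨k, rfl⟩ : ∃ k, j = k + 1 := ⟨j - 1, by omega⟩
  rw [y1, Finset.sum_range_succ', Nat.add_sub_cancel, add_comm, pow_zero]
  congr 1
  rw [Finset.range_eq_Ico, Finset.sum_Ico_add' (fun i => y ^ i) 0 k 1]
  rfl

theorem yx_eq (x y : ℂ) (j : ℕ) : yx x y j = y1 y j + (x - 1) := by
  unfold yx y1; ring

/-- Follows from `y_1(a + b) = y_1(a) + y^a y_1(b)` and `(y - 1) y_1(a) = y^a - 1`. -/
theorem y1_add (y : ℂ) {a b : ℕ} (ha : 1 ≤ a) (hb : 1 ≤ b) :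
    y1 y (a + b) = y1 y a + y1 y b + (y - 1) * (y1 y a * y1 y b) := by
  have h := mul_neg_geom_sum y a
  rw [y1_eq y ha, y1_eq y hb, y1_eq y (by omega), Finset.sum_range_add]
  simp only [pow_add, ← Finset.mul_sum]
  linear_combination (∑ i ∈ Finset.range b, y ^ i) * h

/-! ### Reindexing -/

theorem tutte_congr {V E F : Type*} (e : E ≃ F) (ε : E → Sym2 V) (ε' : F → Sym2 V)
    (h : ∀ i, ε' (e i) = ε i) (x y : ℂ) : tutte ε x y = tutte ε' x y := by
  have hrk : ∀ A : Set E, rk ε A = rk ε' (e '' A) := by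
    intro A
    unfold rk kappa graphOf
    rw [Set.image_image]
    simp only [h]
  unfold tutte
  rw [← finsum_comp_equiv (Equiv.Set.congr e)]
  refine finsum_congr fun A => ?_
  rw [hrk, hrk, Set.image_univ_of_surjective e.surjective, Equiv.Set.congr_apply,
    Set.ncard_image_of_injective _ e.injective]

theorem edge_injective {n : ℕ} (hn : 3 ≤ n) :
    Function.Injective (fun j : ZMod n => s(j - 1, j)) := by
  intro i j h
  rcases Sym2.eq_iff.1 h with ⟨-, h⟩ | ⟨h1, h2⟩
  · exact h
  · exfalso
    have h3 : ((2 : ℕ) : ZMod n) = 0 := by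
      push_cast
      linear_combination (-1 : ZMod n) * h1 + h2
    rw [ZMod.natCast_eq_zero_iff] at h3
    have := Nat.le_of_dvd (by omega) h3
    omega

theorem natCast_injOn (n : ℕ) :
    Set.InjOn (fun j : ℕ => (j : ZMod n)) (Finset.Icc 1 n : Finset ℕ) := by
  intro i hi j hj h
  simp only [Finset.coe_Icc, Set.mem_Icc] at hi hj
  have h' := (ZMod.natCast_eq_natCast_iff i j n).1 h
  rcases le_total i j with hij | hij
  · have := (Nat.modEq_iff_dvd' hij).1 h'
    have := Nat.eq_zero_of_dvd_of_lt this (by omega)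
    omega
  · have := (Nat.modEq_iff_dvd' hij).1 h'.symm
    have := Nat.eq_zero_of_dvd_of_lt this (by omega)
    omega

theorem image_natCast (n : ℕ) [NeZero n] :
    (Finset.Icc 1 n).image (fun j : ℕ => (j : ZMod n)) = Finset.univ := by
  apply Finset.eq_univ_of_card
  rw [Finset.card_image_of_injOn (natCast_injOn n), Nat.card_Icc, ZMod.card]
  omega

/-- Transport of a sum over subsets of `ZMod n` to subsets of `{1, …, n}`. -/
theorem sum_finset_zmod (n : ℕ) [NeZero n] (φ : Finset (ZMod n) → ℂ) :
    ∑ S : Finset (ZMod n), φ S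
      = ∑ S ∈ (Finset.Icc 1 n).powerset, φ (S.image (fun j : ℕ => (j : ZMod n))) := by
  rw [← Finset.powerset_univ, ← image_natCast, Finset.powerset_image, Finset.sum_image]
  intro S hS U hU h
  have hS' : (S : Set ℕ) ⊆ (Finset.Icc 1 n : Finset ℕ) := by
    simpa using hS
  have hU' : (U : Set ℕ) ⊆ (Finset.Icc 1 n : Finset ℕ) := by
    simpa using hU
  have h' := congrArg (fun T : Finset (ZMod n) => (T : Set (ZMod n))) h
  simp only [Finset.coe_image] at h'
  exact Finset.coe_injective (((natCast_injOn n).image_eq_image_iff hS' hU').1 h')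

/-- **Haggard–Pearce–Royle.** Let `n ≥ 3` and let `G` be the multigraph on
`ℤ_n` whose underlying graph is the `n`-cycle with edges `e_j = {j−1, j}` and multiplicities
`m_j = μ(e_j) ≥ 1`.  Then
`T(G;x,y) = Σ_{k=1}^{n−2} (Π_{j=k+1}^n y_x(m_j) Π_{j=1}^{k−1} y_1(m_j))
  + y_x(m_{n−1}+m_n) Π_{j=1}^{n−2} y_1(m_j)`. -/
theorem statement16 (n : ℕ) [NeZero n] (hn : 3 ≤ n) (μ : Sym2 (ZMod n) → ℕ)
    (hμ : ∀ j : ZMod n, 1 ≤ μ s(j - 1, j)) (x y : ℂ) :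
    tutte (multiEps (Finset.image (fun j : ZMod n => s(j - 1, j)) Finset.univ) μ) x y =
      (∑ k ∈ Finset.Icc 1 (n - 2),
        (∏ j ∈ Finset.Icc (k + 1) n, yx x y (μ (cycEdge n j))) *
          ∏ j ∈ Finset.Icc 1 (k - 1), y1 y (μ (cycEdge n j))) +
      yx x y (μ (cycEdge n (n - 1)) + μ (cycEdge n n)) *
        ∏ j ∈ Finset.Icc 1 (n - 2), y1 y (μ (cycEdge n j)) := by
  set m : ZMod n → ℕ := fun j => μ s(j - 1, j) with hmdef
  set a : ℕ → ℂ := fun j => y1 y (μ (cycEdge n j)) with ha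
  have hcyc : ∀ j : ℕ, 1 ≤ μ (cycEdge n j) := fun j => hμ _
  -- Reindex the underlying pairs by `ZMod n`.
  let e : ZMod n ≃ (Finset.image (fun j : ZMod n => s(j - 1, j)) Finset.univ) :=
    Equiv.ofBijective (fun j => ⟨s(j - 1, j), Finset.mem_image_of_mem _ (Finset.mem_univ j)⟩)
      ⟨fun i j h => edge_injective hn (congrArg Subtype.val h), fun ⟨d, hd⟩ => by
        obtain ⟨j, -, rfl⟩ := Finset.mem_image.1 hd
        exact ⟨j, rfl⟩⟩
  let E : (Σ j : ZMod n, Fin (m j)) ≃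
      multiE (Finset.image (fun j : ZMod n => s(j - 1, j)) Finset.univ) μ :=
    Equiv.sigmaCongrLeft (β := fun d => Fin (μ d.1)) e
  rw [← tutte_congr E (cycEps m) _ (fun _ => rfl), tutte_cycEps m hμ, sum_finset_zmod]
  have hterm : ∀ S ∈ (Finset.Icc 1 n).powerset,
      (if S.image (fun j : ℕ => (j : ZMod n)) = Finset.univ then y - 1
        else (x - 1) ^ (n - 1 - (S.image (fun j : ℕ => (j : ZMod n))).card)) *
        ∏ j ∈ S.image (fun j : ℕ => (j : ZMod n)), ∑ i ∈ Finset.range (m j), y ^ i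
      = (if S = Finset.Icc 1 n then y - 1 else (x - 1) ^ ((Finset.Icc 1 n).card - 1 - S.card)) *
        ∏ j ∈ S, a j := by
    intro S hS
    have hinj : Set.InjOn (fun j : ℕ => (j : ZMod n)) (S : Set ℕ) :=
      (natCast_injOn n).mono (by exact_mod_cast Finset.mem_powerset.1 hS)
    have hcard := Finset.card_image_of_injOn hinj
    rw [hcard, Finset.prod_image hinj, Nat.card_Icc, Nat.add_sub_cancel]
    congr 1
    · refine if_congr ?_ rfl rfl
      rw [← Finset.card_eq_iff_eq_univ, hcard, ZMod.card]
      constructor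
      · intro h
        exact Finset.eq_of_subset_of_card_le (Finset.mem_powerset.1 hS) (by simp [h])
      · rintro rfl
        simp
    · refine Finset.prod_congr rfl fun j _ => ?_
      exact (y1_eq y (hcyc j)).symm
  rw [Finset.sum_congr rfl hterm,
    ← Finset.add_sum_erase _ _ (Finset.mem_powerset_self (Finset.Icc 1 n)), if_pos rfl,
    Finset.sum_congr rfl (g := fun S => (x - 1) ^ ((Finset.Icc 1 n).card - 1 - S.card) *
      ∏ j ∈ S, a j) (fun S hS => by rw [if_neg (Finset.ne_of_mem_erase hS)]),
    sum_ssubset]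
  have hk : ∀ k ∈ Finset.Icc 1 n,
      (∏ j ∈ (Finset.Icc 1 n).filter (fun j => k < j), (a j + (x - 1))) *
        ∏ j ∈ (Finset.Icc 1 n).filter (fun j => j < k), a j
      = (∏ j ∈ Finset.Icc (k + 1) n, yx x y (μ (cycEdge n j))) *
          ∏ j ∈ Finset.Icc 1 (k - 1), a j := by
    intro k hk
    rw [Finset.mem_Icc] at hk
    rw [show (Finset.Icc 1 n).filter (fun j => k < j) = Finset.Icc (k + 1) n by
        ext j; simp only [Finset.mem_filter, Finset.mem_Icc]; omega,
      show (Finset.Icc 1 n).filter (fun j => j < k) = Finset.Icc 1 (k - 1) by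
        ext j; simp only [Finset.mem_filter, Finset.mem_Icc]; omega]
    simp only [yx_eq, ha]
  rw [Finset.sum_congr rfl hk]
  -- The terms `k = n - 1`, `k = n` and `S = {1, …, n}` combine into the last summand.
  obtain ⟨N, rfl⟩ : ∃ N, n = N + 2 := ⟨n - 2, by omega⟩
  rw [Finset.sum_Icc_succ_top (by omega), Finset.sum_Icc_succ_top (by omega),
    Finset.prod_Icc_succ_top (by omega), Finset.prod_Icc_succ_top (by omega)]
  simp only [Nat.add_sub_cancel, show N + 2 - 1 = N + 1 from rfl, show N + 1 + 1 = N + 2 from rfl,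
    Finset.Icc_self, Finset.prod_singleton, Finset.Icc_eq_empty_of_lt (Nat.lt_succ_self (N + 2)),
    Finset.prod_empty]
  rw [Finset.prod_Icc_succ_top (b := N) (by omega), yx_eq, yx_eq, y1_add y (hcyc _) (hcyc _)]
  simp only [ha]
  ring
end
end
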